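/- arXiv:2507.16435 — 4 statements merged into one kernel-verified Lean document; each statement's English description precedes it below -/
import Mathlib

section
/- Let k be a differential field of characteristic zero whose field of constants C is algebraically closed, and let k ⊆ k̃ ⊆ K ⊆ E be differential fields such that k̃ is an algebraic field extension of k and E is a Picard–Vessiot extension of k for some monic linear differential operator over k. Then for every x ∈ K, x satisfies some monic linear homogeneous differential equation with coefficients in k if and only if x satisfies some monic linear homogeneous differential equation with coefficients in k̃ (that is, T(K|k) = T(K|k̃)). -/
universe u

/-- A bundled differential field of characteristic zero: a field together with a derivation,
given as a raw function satisfying additivity and the Leibniz rule. -/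
structure DFld : Type (u + 1) where
  carrier : Type u
  [fieldInst : Field carrier]
  [charZeroInst : CharZero carrier]
  deriv : carrier → carrier
  deriv_add : ∀ a b, deriv (a + b) = deriv a + deriv b
  deriv_mul : ∀ a b, deriv (a * b) = deriv a * b + a * deriv b

attribute [instance] DFld.fieldInst DFld.charZeroInst

/-- The result of applying the monic linear differential operator
`∂^n + a_{n-1} ∂^{n-1} + ⋯ + a_1 ∂ + a_0` (with coefficients `a`) to `y`,
where the derivation is given by `D`. -/
def LApply {E : Type u} [Field E] (D : E → E) (n : ℕ) (a : Fin n → E) (y : E) : E :=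
  D^[n] y + ∑ i : Fin n, a i * D^[(i : ℕ)] y

/-- `diffGen D k S` is the smallest differential subfield (w.r.t. the derivation `D`)
containing the subfield `k` and the set `S`; i.e. the differential field `k⟨S⟩`. -/
def diffGen {E : Type u} [Field E] (D : E → E) (k : Subfield E) (S : Set E) : Subfield E :=
  sInf {F : Subfield E | k ≤ F ∧ S ⊆ ↑F ∧ ∀ x ∈ F, D x ∈ F}

/-- The subfield of constants of a differential subfield `k`: `{x ∈ k | D x = 0}`. -/
def constantsOf {E : Type u} [Field E] (D : Derivation ℤ E E) (k : Subfield E) : Subfield E where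
  carrier := {x | x ∈ k ∧ D x = 0}
  zero_mem' := ⟨k.zero_mem, map_zero D⟩
  one_mem' := ⟨k.one_mem, D.map_one_eq_zero⟩
  add_mem' := by
    rintro a b ⟨hak, ha0⟩ ⟨hbk, hb0⟩
    exact ⟨k.add_mem hak hbk, by rw [map_add, ha0, hb0, add_zero]⟩
  neg_mem' := by
    rintro a ⟨hak, ha0⟩
    exact ⟨k.neg_mem hak, by rw [map_neg, ha0, neg_zero]⟩
  mul_mem' := by
    rintro a b ⟨hak, ha0⟩ ⟨hbk, hb0⟩
    exact ⟨k.mul_mem hak hbk, by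
      rw [Derivation.leibniz, ha0, hb0, smul_zero, smul_zero, add_zero]⟩
  inv_mem' := by
    rintro x ⟨hxk, hx0⟩
    refine ⟨k.inv_mem hxk, ?_⟩
    by_cases h : x = 0
    · simp [h]
    · have h1 : D (x * x⁻¹) = 0 := by rw [mul_inv_cancel₀ h, D.map_one_eq_zero]
      rw [Derivation.leibniz, hx0, smul_zero, add_zero, smul_eq_mul] at h1
      exact (mul_eq_zero.mp h1).resolve_left h

/-- `F` is a Picard–Vessiot extension of `k` (inside a common differential field) for the
monic linear differential operator of order `n` with (lower-order) coefficients `a`: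
both are differential subfields, the constants of `F` equal the constants of `k`,
the coefficients lie in `k`, and `F` is differentially generated over `k` by an
`n`-dimensional vector space (over the constants) of solutions. -/
def IsPVWith {E : Type u} [Field E] (D : E → E) (k F : Subfield E) (n : ℕ)
    (a : Fin n → E) : Prop :=
  k ≤ F ∧ (∀ x ∈ k, D x ∈ k) ∧ (∀ x ∈ F, D x ∈ F) ∧
  (∀ x ∈ F, D x = 0 → x ∈ k) ∧
  (∀ i, a i ∈ k) ∧
  ∃ y : Fin n → E,
    (∀ i, y i ∈ F) ∧
    (∀ i, LApply D n a (y i) = 0) ∧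
    (∀ c : Fin n → E, (∀ i, c i ∈ k ∧ D (c i) = 0) → (∑ i, c i * y i) = 0 → ∀ i, c i = 0) ∧
    diffGen D k (Set.range y) = F

/-- `F` is a Picard–Vessiot extension of `k` for some monic linear differential operator. -/
def IsPV {E : Type u} [Field E] (D : E → E) (k F : Subfield E) : Prop :=
  ∃ (n : ℕ) (a : Fin n → E), IsPVWith D k F n a

/-- Relative version: the differential subfield `F` is a Picard–Vessiot extension
of the differential subfield `kb ≤ F`. -/
def IsPVRel {E : Type u} [Field E] (D : E → E) (kb F : Subfield E)
    (hF : ∀ x ∈ F, D x ∈ F) : Prop :=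
  IsPV (fun x : ↥F => (⟨D ↑x, hF ↑x x.2⟩ : ↥F)) (Subfield.comap F.subtype kb) ⊤

/-- The ambient differential field (with derivation `D`) is a strongly normal extension of
its differential subfield `k`: it is finitely generated as a field extension of `k`, has no
new constants, and every differential embedding over `k` into a differential field extension
`M` lands in the compositum of the image of the base copy with the constants of `M`. -/
def IsSN {E : Type u} [Field E] (D : E → E) (k : Subfield E) : Prop :=
  (∀ x ∈ k, D x ∈ k) ∧
  (∃ s : Finset E, Subfield.closure (↑k ∪ ↑s) = (⊤ : Subfield E)) ∧
  (∀ x : E, D x = 0 → x ∈ k) ∧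
  ∀ (M : DFld.{u}) (ι σ : E →+* M.carrier),
    (∀ x, ι (D x) = M.deriv (ι x)) →
    (∀ x, σ (D x) = M.deriv (σ x)) →
    (∀ x ∈ k, σ x = ι x) →
    ∀ e : E, σ e ∈ Subfield.closure (Set.range ι ∪ {m : M.carrier | M.deriv m = 0})

/-- Relative version: the differential subfield `F` is a strongly normal extension of the
differential subfield `kb ≤ F`. -/
def IsSNRel {E : Type u} [Field E] (D : E → E) (kb F : Subfield E)
    (hF : ∀ x ∈ F, D x ∈ F) : Prop :=
  IsSN (fun x : ↥F => (⟨D ↑x, hF ↑x x.2⟩ : ↥F)) (Subfield.comap F.subtype kb)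

/-- `K` is a finite field extension of the subfield `M`. -/
def FinExt {E : Type u} [Field E] (M K : Subfield E) : Prop :=
  ∃ h : M ≤ K,
    letI : Algebra ↥M ↥K := (Subfield.inclusion h).toAlgebra
    Module.Finite ↥M ↥K

/-- The transcendence degree of the subfield `K` over the subfield `k`, as the supremum of the
cardinalities of subsets of `K` that are algebraically independent over `k`. -/
noncomputable def trdegOf {E : Type u} [Field E] (k K : Subfield E) : Cardinal.{u} :=
  ⨆ s : {s : Set E // s ⊆ (K : Set E) ∧ AlgebraicIndependent ↥k (fun x : ↥s => (x : E))},
    Cardinal.mk ↥(s.1)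

/-- `K` and `M` are free over `k`: every finite subset of `K` that is algebraically
independent over `k` remains algebraically independent over `M`. -/
def FreeOver {E : Type u} [Field E] (k K M : Subfield E) : Prop :=
  ∀ s : Finset E, (↑s : Set E) ⊆ (K : Set E) →
    AlgebraicIndependent ↥k (fun x : ↥(↑s : Set E) => (x : E)) →
    AlgebraicIndependent ↥M (fun x : ↥(↑s : Set E) => (x : E))

/-- `K` is a `k`-irreducible differential field: it is a finitely generated differential field
extension of `k` of transcendence degree at least 1, and every intermediate differential field
`k ⊂ M ⊆ K` has transcendence degree `0` or `trdeg(K|k)` over `k`. -/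
def IsIrred {E : Type u} [Field E] (D : E → E) (k K : Subfield E) : Prop :=
  (∃ s : Finset E, diffGen D k ↑s = K) ∧
  1 ≤ trdegOf k K ∧
  ∀ M : Subfield E, (∀ x ∈ M, D x ∈ M) → k < M → M ≤ K →
    trdegOf k M = 0 ∨ trdegOf k M = trdegOf k K

/-- `Kf` is a `d`-solvable extension of `k`: there is a tower of differential fields starting
at (a copy of) `k`, each step being a finite algebraic extension or a Picard–Vessiot extension
for an operator of order at most `d`, whose top contains (the copy of) `Kf`. -/
def IsDSolvable {E : Type u} [Field E] (D : E → E) (k Kf : Subfield E) (d : ℕ) : Prop :=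
  ∃ (Ω : DFld.{u}) (j : E →+* Ω.carrier),
    (∀ x, j (D x) = Ω.deriv (j x)) ∧
    ∃ (r : ℕ) (T : Fin (r + 1) → Subfield Ω.carrier),
      T 0 = Subfield.map j k ∧
      Subfield.map j Kf ≤ T (Fin.last r) ∧
      (∀ i, ∀ x ∈ T i, Ω.deriv x ∈ T i) ∧
      ∀ i : Fin r,
        FinExt (T i.castSucc) (T i.succ) ∨
        ∃ n ≤ d, ∃ a : Fin n → Ω.carrier, IsPVWith Ω.deriv (T i.castSucc) (T i.succ) n a

/-- `Kn` is generated over `kb`, as a differential field with the same constants, by one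
solution `z` of an inhomogeneous equation `L(y) = b` (with `L` monic over `kb` of order
`n ≤ d` and `b ∈ kb`) together with an `n`-dimensional space (over the constants) of
solutions of `L(y) = 0`. -/
def IsPVInhomLe {E : Type u} [Field E] (D : E → E) (kb Kn : Subfield E) (d : ℕ) : Prop :=
  kb ≤ Kn ∧ (∀ x ∈ kb, D x ∈ kb) ∧ (∀ x ∈ Kn, D x ∈ Kn) ∧
  (∀ x ∈ Kn, D x = 0 → x ∈ kb) ∧
  ∃ n, n ≤ d ∧ ∃ (a : Fin n → E) (b z : E) (y : Fin n → E),
    (∀ i, a i ∈ kb) ∧ b ∈ kb ∧ z ∈ Kn ∧ (∀ i, y i ∈ Kn) ∧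
    LApply D n a z = b ∧
    (∀ i, LApply D n a (y i) = 0) ∧
    (∀ c : Fin n → E, (∀ i, c i ∈ kb ∧ D (c i) = 0) → (∑ i, c i * y i) = 0 → ∀ i, c i = 0) ∧
    diffGen D kb (insert z (Set.range y)) = Kn

/-- `Kf` is a `d⁺`-solvable extension of `k`. -/
def IsDPlusSolvable {E : Type u} [Field E] (D : E → E) (k Kf : Subfield E) (d : ℕ) : Prop :=
  ∃ (Ω : DFld.{u}) (j : E →+* Ω.carrier),
    (∀ x, j (D x) = Ω.deriv (j x)) ∧
    ∃ (r : ℕ) (T : Fin (r + 1) → Subfield Ω.carrier),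
      T 0 = Subfield.map j k ∧
      Subfield.map j Kf ≤ T (Fin.last r) ∧
      (∀ i, ∀ x ∈ T i, Ω.deriv x ∈ T i) ∧
      ∀ i : Fin r,
        FinExt (T i.castSucc) (T i.succ) ∨ IsPVInhomLe Ω.deriv (T i.castSucc) (T i.succ) d

/-- `TSet D kb K` is the set of elements of `K` annihilated by some monic linear differential
operator with coefficients in `kb`. -/
def TSet {E : Type u} [Field E] (D : E → E) (kb K : Subfield E) : Set E :=
  {x | x ∈ K ∧ ∃ (n : ℕ) (a : Fin n → E), (∀ i, a i ∈ kb) ∧ LApply D n a x = 0}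

theorem aux_poly {E : Type u} [Field E] (D : Derivation ℤ E E) (k : Subfield E)
    (hk : ∀ x ∈ k, D x ∈ k) (F : IntermediateField k E) (a : E) (ha : a ∈ F)
    (p : Polynomial k) :
    D (Polynomial.aeval a p) - Polynomial.aeval a (Polynomial.derivative p) * D a ∈ F := by
  induction p using Polynomial.induction_on' with
  | add p q hp hq =>
    have := F.add_mem hp hq
    simp only [map_add] at this ⊢
    convert this using 1
    ring
  | monomial n c =>
    have h : D (algebraMap k E c) ∈ F := F.algebraMap_mem ⟨_, hk _ c.2⟩
    have h2 := F.mul_mem h (pow_mem ha n)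
    convert h2 using 1
    rw [Polynomial.derivative_monomial, Polynomial.aeval_monomial, Polynomial.aeval_monomial,
      Derivation.leibniz, Derivation.leibniz_pow]
    simp only [smul_eq_mul, map_mul, map_natCast, nsmul_eq_mul]
    ring

theorem aux_mem {E : Type u} [Field E] [CharZero E] (D : Derivation ℤ E E) (k : Subfield E)
    (hk : ∀ x ∈ k, D x ∈ k) (F : IntermediateField k E) (a : E) (ha : a ∈ F)
    (hal : IsAlgebraic k a) : D a ∈ F := by
  have h := aux_poly D k hk F a ha (minpoly k a)
  have hne : Polynomial.aeval a (Polynomial.derivative (minpoly k a)) ≠ 0 :=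
    (minpoly.irreducible hal.isIntegral).separable.aeval_derivative_ne_zero (minpoly.aeval k a)
  have hm : Polynomial.aeval a (Polynomial.derivative (minpoly k a)) ∈ F :=
    Polynomial.aeval_mem_adjoin_singleton k a |> fun h => (Algebra.adjoin_le (S := F.toSubalgebra) (by simpa using ha)) h
  rw [minpoly.aeval, map_zero, zero_sub] at h
  have := F.mul_mem (F.inv_mem hm) (F.neg_mem h)
  rwa [neg_neg, inv_mul_cancel_left₀ hne] at this

theorem aux_fin {k E : Type u} [Field k] [Field E] [Algebra k E] (W : Submodule k E)
    [Module.Finite k W] (w : ℕ → E) (hw : ∀ m, w m ∈ W) :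
    ∃ (m : ℕ) (c : Fin m → k), w m = ∑ i, c i • w i := by
  let v : ℕ → W := fun m => ⟨w m, hw m⟩
  let U : ℕ →o Submodule k W :=
    ⟨fun m => Submodule.span k (v '' Set.Iio m), fun m n h =>
      Submodule.span_mono (Set.image_mono (Set.Iio_subset_Iio h))⟩
  obtain ⟨m, hm⟩ := monotone_stabilizes_iff_noetherian.mpr
    (inferInstance : IsNoetherian k W) U
  have h1 : v m ∈ U m := by
    rw [hm (m + 1) (Nat.le_succ m)]
    exact Submodule.subset_span ⟨m, Nat.lt_succ_self m, rfl⟩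
  have h2 : v '' Set.Iio m = Set.range (fun i : Fin m => v i) := by
    ext z
    constructor
    · rintro ⟨i, hi, rfl⟩
      exact ⟨⟨i, hi⟩, rfl⟩
    · rintro ⟨i, rfl⟩
      exact ⟨i, i.2, rfl⟩
  change v m ∈ Submodule.span k (v '' Set.Iio m) at h1
  rw [h2, Submodule.mem_span_range_iff_exists_fun] at h1
  obtain ⟨c, hc⟩ := h1
  refine ⟨m, c, ?_⟩
  have := congrArg W.subtype hc
  simpa [v] using this.symm

theorem aux_main {E : Type u} [Field E] [CharZero E] (D : Derivation ℤ E E)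
    (k : Subfield E) (hk : ∀ x ∈ k, D x ∈ k) (n : ℕ) (a : Fin n → E)
    (hal : ∀ i, IsAlgebraic k (a i)) (x : E) (hx : LApply (⇑D) n a x = 0) :
    ∃ (m : ℕ) (c : Fin m → E), (∀ i, c i ∈ k) ∧ LApply (⇑D) m c x = 0 := by
  let F : IntermediateField k E := IntermediateField.adjoin k (Set.range a)
  have : FiniteDimensional k F :=
    IntermediateField.finiteDimensional_adjoin (by rintro _ ⟨i, rfl⟩; exact (hal i).isIntegral)
  have hF : ∀ z ∈ F, D z ∈ F := fun z hz => aux_mem D k hk F z hz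
    (by simpa using (Algebra.IsAlgebraic.isAlgebraic (R := k) (⟨z, hz⟩ : F)).algebraMap (A := E))
  have haF : ∀ i, a i ∈ F := fun i => IntermediateField.subset_adjoin _ _ ⟨i, rfl⟩
  let W : Submodule F E := Submodule.span F (Set.range fun i : Fin n => (⇑D)^[(i : ℕ)] x)
  have hlt : ∀ i < n, (⇑D)^[i] x ∈ W := fun i hi => Submodule.subset_span ⟨⟨i, hi⟩, rfl⟩
  have hn : (⇑D)^[n] x ∈ W := by
    unfold LApply at hx
    rw [eq_neg_of_add_eq_zero_left hx]
    refine W.neg_mem (W.sum_mem fun i _ => ?_)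
    exact W.smul_mem (⟨a i, haF i⟩ : F) (hlt i i.2)
  have hD : ∀ w ∈ W, D w ∈ W := by
    intro w hw
    induction hw using Submodule.span_induction with
    | mem z hz =>
      obtain ⟨i, rfl⟩ := hz
      change D ((⇑D)^[(i : ℕ)] x) ∈ W
      rw [← Function.iterate_succ_apply' (⇑D)]
      rcases Nat.lt_or_eq_of_le (Nat.succ_le_of_lt i.2) with h | h
      · exact hlt _ h
      · have h' : (i : ℕ).succ = n := h
        rw [h']; exact hn
    | zero => simp
    | add y z _ _ hy hz => rw [map_add]; exact W.add_mem hy hz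
    | smul f z hz' hz =>
      have e : D (f • z) = f • D z + (⟨D f, hF _ f.2⟩ : F) • z := by
        change D ((f : E) * z) = (f : E) * D z + D f * z
        rw [Derivation.leibniz, smul_eq_mul, smul_eq_mul, mul_comm z]
      rw [e]
      exact W.add_mem (W.smul_mem _ hz) (W.smul_mem _ hz')
  have hall : ∀ m, (⇑D)^[m] x ∈ W := by
    intro m
    induction m with
    | zero =>
      rcases Nat.eq_zero_or_pos n with h | h
      · rw [h] at hn; exact hn
      · exact hlt 0 h
    | succ m ih => rw [Function.iterate_succ_apply']; exact hD _ ih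
  have : Module.Finite F W := Module.Finite.span_of_finite F (Set.finite_range _)
  have : Module.Finite k W := Module.Finite.trans F W
  have : Module.Finite k (W.restrictScalars k) := this
  obtain ⟨m, c, hc⟩ := aux_fin (W.restrictScalars k) (fun m => (⇑D)^[m] x) hall
  refine ⟨m, fun i => -(c i : E), fun i => k.neg_mem (c i).2, ?_⟩
  unfold LApply
  have hc' : (⇑D)^[m] x = ∑ i : Fin m, (c i : E) * (⇑D)^[(i : ℕ)] x := hc
  rw [hc']
  simp

/-- If `k ⊆ k̃ ⊆ K ⊆ E` with `k̃` algebraic over `k` and `E` a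
Picard–Vessiot extension of `k`, then `T(K|k) = T(K|k̃)`. -/
theorem stmt5 {E : Type u} [Field E] [CharZero E] (D : Derivation ℤ E E)
    (k kt K : Subfield E)
    (hk : ∀ x ∈ k, D x ∈ k) (hkt : ∀ x ∈ kt, D x ∈ kt) (hK : ∀ x ∈ K, D x ∈ K)
    (hC : IsAlgClosed ↥(constantsOf D k))
    (h1 : k ≤ kt) (h2 : kt ≤ K)
    (halg : ∀ x ∈ kt, IsAlgebraic ↥k x)
    (hPV : IsPV (⇑D) k ⊤) :
    TSet (⇑D) k K = TSet (⇑D) kt K := by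
  ext x
  constructor
  · rintro ⟨hx, n, a, ha, h⟩
    exact ⟨hx, n, a, fun i => h1 (ha i), h⟩
  · rintro ⟨hx, n, a, ha, h⟩
    exact ⟨hx, aux_main D k hk n a (fun i => halg _ (ha i)) x h⟩
end

section
/- Let k ⊂ E be a field extension and let K, L, M be intermediate fields of E/k such that: trdeg(K|k) is finite; K and M are free over k; M ⊆ L ⊆ KM (where KM denotes the compositum inside E) and trdeg(L|M) ≥ 1; K is exactly the fixed field in KM of a subgroup 𝒢 of the group of field automorphisms of KM fixing K pointwise; and σ(L) ⊆ L for every σ ∈ 𝒢. Then there exists an element y ∈ L with y ∈ K and y ∉ k. -/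
universe u

section stmt8_helpers

variable {E : Type u} [Field E]

theorem stmt8_indep (k K L M : Subfield E)
    (hLKM : L ≤ K ⊔ M)
    (G : Subgroup (↥(K ⊔ M) ≃+* ↥(K ⊔ M)))
    (hfix : ∀ σ ∈ G, ∀ z : ↥(K ⊔ M), (z : E) ∈ K → σ z = z)
    (hfixed : ∀ z : ↥(K ⊔ M), (∀ σ ∈ G, σ z = z) → (z : E) ∈ K)
    (hstab : ∀ σ ∈ G, ∀ z : ↥(K ⊔ M), (z : E) ∈ L → ((σ z : ↥(K ⊔ M)) : E) ∈ L)
    (hk : ∀ y : E, y ∈ L → y ∈ K → y ∈ k)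
    {ι : Type*} (v : ι → E) (hv : ∀ i, v i ∈ K)
    (s : Finset ι)
    (hind : ∀ t ⊆ s, ∀ c : ι → E, (∀ i ∈ t, c i ∈ k) → ∑ i ∈ t, c i * v i = 0 →
      ∀ i ∈ t, c i = 0) :
    ∀ c : ι → E, (∀ i, c i ∈ L) → ∑ i ∈ s, c i * v i = 0 → ∀ i ∈ s, c i = 0 := by
  classical
  induction s using Finset.induction_on with
  | empty => simp
  | insert a s ha ih =>
    intro c hc hsum
    have ih' := ih (fun t ht => hind t (ht.trans (Finset.subset_insert _ _)))
    by_cases hca : c a = 0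
    · rw [Finset.sum_insert ha, hca, zero_mul, zero_add] at hsum
      intro i hi
      rcases Finset.mem_insert.1 hi with rfl | hi
      · exact hca
      · exact ih' c hc hsum i hi
    · exfalso
      set d : ι → ↥(K ⊔ M) := fun i => ⟨c i / c a, hLKM (L.div_mem (hc i) (hc a))⟩ with hd
      set w : ι → ↥(K ⊔ M) := fun i => ⟨v i, (le_sup_left : K ≤ K ⊔ M) (hv i)⟩ with hw
      have hdL : ∀ i, (d i : E) ∈ L := fun i => L.div_mem (hc i) (hc a)
      have hda : d a = 1 := Subtype.ext (div_self hca)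
      have hdsum : ∑ i ∈ insert a s, d i * w i = 0 := by
        apply Subtype.ext
        have : ∑ i ∈ insert a s, (c i / c a) * v i = 0 := by
          simp_rw [div_mul_eq_mul_div, ← Finset.sum_div, hsum, zero_div]
        simpa [hd, hw] using this
      have hσ : ∀ σ ∈ G, ∀ i ∈ s, σ (d i) = d i := by
        intro σ hσG
        have h1 : ∑ i ∈ insert a s, σ (d i) * w i = 0 := by
          have := congrArg σ hdsum
          rw [map_sum, map_zero] at this
          rw [← this]
          refine Finset.sum_congr rfl fun i _ => ?_
          rw [map_mul, hfix σ hσG (w i) (hv i)]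
        have h2 : ∑ i ∈ s, (σ (d i) - d i) * w i = 0 := by
          rw [Finset.sum_insert ha] at h1 hdsum
          rw [hda, map_one] at h1
          rw [hda] at hdsum
          simp_rw [sub_mul, Finset.sum_sub_distrib]
          linear_combination h1 - hdsum
        have h3 := ih' (fun i => ((σ (d i) - d i : ↥(K ⊔ M)) : E))
          (fun i => L.sub_mem (hstab σ hσG _ (hdL i)) (hdL i))
          (by simpa [hw] using congrArg (Subtype.val) h2)
        intro i hi
        exact sub_eq_zero.1 (Subtype.ext (h3 i hi))
      have hdk : ∀ i ∈ insert a s, (d i : E) ∈ k := by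
        intro i hi
        refine hk _ (hdL i) (hfixed _ fun σ hσG => ?_)
        rcases Finset.mem_insert.1 hi with rfl | hi
        · rw [hda, map_one]
        · exact hσ σ hσG i hi
      have := hind _ subset_rfl (fun i => (d i : E)) hdk
        (by simpa [hw] using congrArg (Subtype.val) hdsum) a (Finset.mem_insert_self _ _)
      rw [hda] at this
      exact one_ne_zero this

theorem stmt8_aeval (F : Subfield E) {ι : Type*} (x : ι → E) (p : MvPolynomial ι ↥F) :
    MvPolynomial.aeval x p = ∑ m ∈ p.support, F.subtype (p.coeff m) * m.prod fun i n => x i ^ n := by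
  rw [MvPolynomial.aeval_def, MvPolynomial.eval₂_eq]
  rfl

theorem stmt8_algIndep (k K L M : Subfield E)
    (hLKM : L ≤ K ⊔ M)
    (G : Subgroup (↥(K ⊔ M) ≃+* ↥(K ⊔ M)))
    (hfix : ∀ σ ∈ G, ∀ z : ↥(K ⊔ M), (z : E) ∈ K → σ z = z)
    (hfixed : ∀ z : ↥(K ⊔ M), (∀ σ ∈ G, σ z = z) → (z : E) ∈ K)
    (hstab : ∀ σ ∈ G, ∀ z : ↥(K ⊔ M), (z : E) ∈ L → ((σ z : ↥(K ⊔ M)) : E) ∈ L)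
    (hk : ∀ y : E, y ∈ L → y ∈ K → y ∈ k)
    {ι : Type*} (x : ι → E) (hx : ∀ i, x i ∈ K) (h : AlgebraicIndependent ↥k x) :
    AlgebraicIndependent ↥L x := by
  classical
  rw [algebraicIndependent_iff] at h ⊢
  intro p hp
  rw [stmt8_aeval] at hp
  have := stmt8_indep k K L M hLKM G hfix hfixed hstab hk
    (fun m : ι →₀ ℕ => m.prod fun i n => x i ^ n)
    (fun m => K.prod_mem fun i _ => K.pow_mem (hx i) _) p.support ?_
    (fun m => L.subtype (p.coeff m)) (fun m => (p.coeff m).2) hp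
  · ext m
    by_cases hm : m ∈ p.support
    · simpa using this m hm
    · simp [MvPolynomial.notMem_support_iff.1 hm]
  · intro t _ c hc hsum
    let q : MvPolynomial ι ↥k :=
      ∑ m ∈ t.attach, MvPolynomial.monomial m.1 ⟨c m.1, hc m.1 m.2⟩
    have hq : q = 0 := by
      apply h
      rw [map_sum, ← hsum, ← Finset.sum_attach t]
      refine Finset.sum_congr rfl fun m _ => ?_
      rw [MvPolynomial.aeval_monomial]
      rfl
    intro i hi
    have h1 := congrArg (MvPolynomial.coeff i) hq
    simp only [q, MvPolynomial.coeff_sum, MvPolynomial.coeff_monomial,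
      MvPolynomial.coeff_zero] at h1
    rw [Finset.sum_eq_single (⟨i, hi⟩ : {m // m ∈ t})] at h1
    · rw [if_pos rfl] at h1
      exact congrArg Subtype.val h1
    · intro b _ hb
      rw [if_neg]
      intro hbi
      exact hb (Subtype.ext hbi)
    · intro hn
      exact absurd (Finset.mem_attach _ _) hn

theorem stmt8_core (k K L M : Subfield E)
    (hkM : k ≤ M) (hML : M ≤ L) (hLKM : L ≤ K ⊔ M)
    (hind : ∀ s : Set E, s ⊆ (K : Set E) → AlgebraicIndependent ↥k (fun x : ↥s => (x : E)) →
      AlgebraicIndependent ↥L (fun x : ↥s => (x : E)))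
    (t : E) (htL : t ∈ L) (ht : Transcendental ↥M t) : False := by
  obtain ⟨s, -, hs⟩ := exists_maximal_algebraicIndependent (R := ↥k) (A := E) ∅ (K : Set E)
    (Set.empty_subset _) (algebraicIndependent_empty_type_iff.2
      (algebraMap ↥k E).injective)
  have hsL := hind s hs.prop.2 hs.prop.1
  let : Algebra ↥M ↥L := (Subfield.inclusion hML).toAlgebra
  have : IsScalarTower ↥M ↥L E := IsScalarTower.of_algebraMap_eq fun _ => rfl
  have h1 : AlgebraicIndependent ↥M (fun _ : Unit => t) :=
    algebraicIndependent_unique_type_iff.2 ht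
  have h2 : AlgebraicIndependent ↥M (Sum.elim (fun x : ↥s => (x : E)) (fun _ : Unit => t)) :=
    h1.sumElim_of_tower (S := ↥L) (by rintro _ ⟨_, rfl⟩; exact ⟨⟨t, htL⟩, rfl⟩) hsL
  have h3 : AlgebraicIndependent ↥M (Sum.elim (fun _ : Unit => t) (fun x : ↥s => (x : E))) := by
    refine (algebraicIndependent_equiv' (Equiv.sumComm _ _) ?_).1 h2
    ext (_ | _) <;> rfl
  have h4 := (AlgebraicIndependent.sumElim_iff.1 h3).2
  rw [algebraicIndependent_unique_type_iff, Subtype.range_coe] at h4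
  apply h4
  rw [← IntermediateField.isAlgebraic_adjoin_iff]
  set F := IntermediateField.adjoin ↥M s with hF
  have hle : K ⊔ M ≤ (algebraicClosure ↥F E).toSubfield := by
    refine sup_le ?_ ?_
    · intro x hx
      change x ∈ algebraicClosure ↥F E
      rw [mem_algebraicClosure_iff]
      have hxa : IsAlgebraic (Algebra.adjoin ↥k s) x := by
        by_contra hna
        have hxs : x ∉ s := fun hxs => hna
          (isAlgebraic_algebraMap (⟨x, Algebra.subset_adjoin hxs⟩ : Algebra.adjoin ↥k s))
        have hins : AlgebraicIndepOn ↥k id (insert x s) :=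
          (AlgebraicIndepOn.insert_iff hxs).2 ⟨hs.prop.1, by rw [Set.image_id]; exact hna⟩
        have := hs.le_of_ge ⟨hins, Set.insert_subset hx hs.prop.2⟩ (Set.subset_insert _ _)
        exact hxs (this (Set.mem_insert _ _))
      have hsub : (Algebra.adjoin ↥k s).toSubring ≤ F.toSubfield.toSubring := by
        intro y hy
        change y ∈ F
        have hy' : y ∈ Algebra.adjoin ↥k s := hy
        induction hy' using Algebra.adjoin_induction with
        | mem y h => exact IntermediateField.subset_adjoin _ _ h
        | algebraMap r => exact F.algebraMap_mem ⟨r, hkM r.2⟩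
        | add y z _ _ h h' => exact F.add_mem (h ‹_›) (h' ‹_›)
        | mul y z _ _ h h' => exact F.mul_mem (h ‹_›) (h' ‹_›)
      exact hxa.ringHom_of_comp_eq (Subring.inclusion hsub : ↥(Algebra.adjoin ↥k s) →+* ↥F) (RingHom.id E)
        (Subring.inclusion_injective hsub) rfl
    · intro x hx
      exact (algebraicClosure ↥F E).algebraMap_mem (⟨x, F.algebraMap_mem ⟨x, hx⟩⟩ : ↥F)
  exact mem_algebraicClosure_iff.1 (hle (hLKM htL))

end stmt8_helpers

/-- (Field-theoretic descent.) If `K`, `L`, `M` are intermediate fields of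
`E/k` with `trdeg(K|k)` finite, `K` and `M` free over `k`, `M ⊆ L ⊆ KM`, `trdeg(L|M) ≥ 1`,
and `K` is the fixed field of a group `𝒢` of automorphisms of `KM` fixing `K` pointwise and
stabilizing `L`, then `(K \ k) ∩ L` is nonempty. -/
theorem stmt8 {E : Type u} [Field E] (k K L M : Subfield E)
    (hkK : k ≤ K) (hkL : k ≤ L) (hkM : k ≤ M)
    (htd : trdegOf k K < Cardinal.aleph0)
    (hfree : FreeOver k K M)
    (hML : M ≤ L) (hLKM : L ≤ K ⊔ M)
    (htdL : 1 ≤ trdegOf M L)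
    (G : Subgroup (↥(K ⊔ M) ≃+* ↥(K ⊔ M)))
    (hfix : ∀ σ ∈ G, ∀ z : ↥(K ⊔ M), (z : E) ∈ K → σ z = z)
    (hfixed : ∀ z : ↥(K ⊔ M), (∀ σ ∈ G, σ z = z) → (z : E) ∈ K)
    (hstab : ∀ σ ∈ G, ∀ z : ↥(K ⊔ M), (z : E) ∈ L → ((σ z : ↥(K ⊔ M)) : E) ∈ L) :
    ∃ y : E, y ∈ L ∧ y ∈ K ∧ y ∉ k := by
  by_contra hcon
  push Not at hcon
  have hnt : ∃ t ∈ L, Transcendental ↥M t := by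
    by_contra hno
    push Not at hno
    refine absurd htdL (not_le.2 ?_)
    refine lt_of_le_of_lt (b := 0) ?_ zero_lt_one
    refine ciSup_le' ?_
    rintro ⟨s, hsL, hs⟩
    have : IsEmpty ↥s := ⟨fun x => hno x (hsL x.2) (hs.transcendental x)⟩
    simp
  obtain ⟨t, htL, ht⟩ := hnt
  exact stmt8_core k K L M hkM hML hLKM (fun s hs h =>
    stmt8_algIndep k K L M hLKM G hfix hfixed hstab hcon _ (fun i => hs i.2) h) t htL ht
end

section
/- Let k ⊂ E be a field extension and let K, L, M be intermediate fields of E/k such that: trdeg(K|k) is finite; K and M are free over k; M ⊆ L ⊆ KM and trdeg(L|M) ≥ 1; K is exactly the fixed field in KM of a subgroup 𝒢 of the group of field automorphisms of KM fixing K pointwise; σ(L) ⊆ L and σ(M) = M for every σ ∈ 𝒢. Suppose moreover that L = M(η) for an element η ∈ L transcendental over M, and that for every σ ∈ 𝒢 there exists a_σ ∈ M with σ(η) = a_σ·η. Then there exist an element x ∈ M and a positive integer l such that x·η^l ∈ K and x·η^l ∉ k. -/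
universe u

theorem aux_lin {E : Type u} [Field E] (K L M : Subfield E)
    (hML : M ≤ L) (hLKM : L ≤ K ⊔ M)
    (G : Subgroup (↥(K ⊔ M) ≃+* ↥(K ⊔ M)))
    (hfix : ∀ σ ∈ G, ∀ z : ↥(K ⊔ M), (z : E) ∈ K → σ z = z)
    (hfixed : ∀ z : ↥(K ⊔ M), (∀ σ ∈ G, σ z = z) → (z : E) ∈ K)
    (hstab : ∀ σ ∈ G, ∀ z : ↥(K ⊔ M), (z : E) ∈ L → ((σ z : ↥(K ⊔ M)) : E) ∈ L)
    {ι : Type*} (v : ι → E) (hv : ∀ i, v i ∈ K)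
    (hC : ∀ t : Finset ι, ∀ g : ι → E, (∀ i ∈ t, g i ∈ L ∧ g i ∈ K) →
      ∑ i ∈ t, g i * v i = 0 → ∀ i ∈ t, g i = 0) :
    ∀ (n : ℕ) (t : Finset ι), t.card = n → ∀ g : ι → E, (∀ i, g i ∈ L) →
      ∑ i ∈ t, g i * v i = 0 → ∀ i ∈ t, g i = 0 := by
  classical
  intro n
  induction n with
  | zero =>
    intro t ht g _ _ i hi
    rw [Finset.card_eq_zero] at ht
    simp [ht] at hi
  | succ n ih =>
    intro t ht g hg hsum i₀ hi₀
    by_contra hne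
    -- normalise
    set h : ι → E := fun i => g i / g i₀ with hh
    have hhL : ∀ i, h i ∈ L := fun i => L.div_mem (hg i) (hg i₀)
    have hh0 : h i₀ = 1 := div_self hne
    have hhsum : ∑ i ∈ t, h i * v i = 0 := by
      have : ∑ i ∈ t, h i * v i = (∑ i ∈ t, g i * v i) / g i₀ := by
        rw [Finset.sum_div]
        exact Finset.sum_congr rfl fun i _ => by simp only [hh]; ring
      rw [this, hsum, zero_div]
    let H : ι → ↥(K ⊔ M) := fun i => ⟨h i, hLKM (hhL i)⟩
    let V : ι → ↥(K ⊔ M) := fun i => ⟨v i, (le_sup_left : K ≤ K ⊔ M) (hv i)⟩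
    have hHV : ∑ i ∈ t, H i * V i = 0 := by
      apply Subtype.ext
      push_cast
      exact hhsum
    have hH : ∀ i ∈ t, ∀ σ ∈ G, σ (H i) = H i := by
      intro i hi σ hσ
      by_cases hii : i = i₀
      · have : H i₀ = 1 := Subtype.ext hh0
        rw [hii, this, map_one]
      have h1 : ∑ i ∈ t, σ (H i) * V i = 0 := by
        have := congrArg σ hHV
        rw [map_sum, map_zero] at this
        rw [← this]
        refine Finset.sum_congr rfl fun i _ => ?_
        rw [map_mul, hfix σ hσ (V i) (hv i)]
      have h2 : ∑ i ∈ t, (σ (H i) - H i) * V i = 0 := by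
        simp only [sub_mul, Finset.sum_sub_distrib, h1, hHV, sub_zero]
      rw [← Finset.add_sum_erase t _ hi₀] at h2
      have : H i₀ = 1 := Subtype.ext hh0
      rw [this, map_one, sub_self, zero_mul, zero_add] at h2
      have h3 := ih (t.erase i₀) (by rw [Finset.card_erase_of_mem hi₀, ht]; rfl)
        (fun i => ((σ (H i) - H i : ↥(K ⊔ M)) : E))
        (fun i => by
          push_cast
          exact L.sub_mem (hstab σ hσ _ (hhL i)) (hhL i))
        (by
          have := congrArg (fun z : ↥(K ⊔ M) => (z : E)) h2
          push_cast at this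
          push_cast
          exact this) i (Finset.mem_erase.mpr ⟨hii, hi⟩)
      exact sub_eq_zero.mp (Subtype.ext h3)
    have := hC t h (fun i hi => ⟨hhL i, hfixed (H i) (hH i hi)⟩) hhsum i₀ hi₀
    rw [hh0] at this
    exact one_ne_zero this

theorem aux_indep {E : Type u} [Field E] (K L M : Subfield E)
    (hML : M ≤ L) (hLKM : L ≤ K ⊔ M)
    (G : Subgroup (↥(K ⊔ M) ≃+* ↥(K ⊔ M)))
    (hfix : ∀ σ ∈ G, ∀ z : ↥(K ⊔ M), (z : E) ∈ K → σ z = z)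
    (hfixed : ∀ z : ↥(K ⊔ M), (∀ σ ∈ G, σ z = z) → (z : E) ∈ K)
    (hstab : ∀ σ ∈ G, ∀ z : ↥(K ⊔ M), (z : E) ∈ L → ((σ z : ↥(K ⊔ M)) : E) ∈ L)
    (hsub : ∀ z, z ∈ L → z ∈ K → z ∈ M)
    {ι : Type*} (v : ι → E) (hv : ∀ i, v i ∈ K) (hM : AlgebraicIndependent M v) :
    AlgebraicIndependent L v := by
  classical
  let w : (ι →₀ ℕ) → E := fun d => d.prod fun i e => v i ^ e
  have hw : ∀ d, w d ∈ K := fun d => K.prod_mem fun i _ => K.pow_mem (hv i) _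
  have key := aux_lin K L M hML hLKM G hfix hfixed hstab w hw (by
    intro t g hg hsum i hi
    let p : MvPolynomial ι M := ∑ d ∈ t.attach,
      MvPolynomial.monomial d.1 (⟨g d.1, hsub _ (hg d.1 d.2).1 (hg d.1 d.2).2⟩ : M)
    have hp : MvPolynomial.aeval v p = 0 := by
      rw [← hsum, ← Finset.sum_attach]
      simp only [p, map_sum, MvPolynomial.aeval_monomial]
      rfl
    have hp0 := hM.eq_zero_of_aeval_eq_zero p hp
    have := congrArg (MvPolynomial.coeff i) hp0
    simp only [p, MvPolynomial.coeff_sum, MvPolynomial.coeff_monomial, MvPolynomial.coeff_zero] at this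
    rw [Finset.sum_eq_single (⟨i, hi⟩ : t)] at this
    · simpa [Subtype.ext_iff] using this
    · rintro ⟨b, hb⟩ _ hne
      rw [if_neg]
      rintro rfl
      exact hne rfl
    · intro h; exact absurd (Finset.mem_attach _ _) h)
  rw [algebraicIndependent_iff]
  intro p hp
  ext d
  by_cases hd : d ∈ p.support
  · have := key _ p.support rfl (fun d => ((p.coeff d : L) : E)) (fun d => (p.coeff d).2) (by
      rw [← hp, MvPolynomial.aeval_def, MvPolynomial.eval₂_eq]
      rfl) d hd
    simpa using this
  · rw [MvPolynomial.notMem_support_iff.mp hd]; simp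

theorem aux_alg {E : Type u} [Field E] (k K M : Subfield E) (hkM : k ≤ M) (s : Set E)
    (hs : ∀ a ∈ K, IsAlgebraic (Algebra.adjoin k s) a) (η : E) (hη : η ∈ K ⊔ M) :
    IsAlgebraic (Algebra.adjoin M s) η := by
  have hK : ∀ a ∈ K, IsAlgebraic (Algebra.adjoin M s) a := by
    intro a ha
    have hle : (Algebra.adjoin k s).toSubring ≤ (Algebra.adjoin M s).toSubring := by
      intro x hx
      change x ∈ Algebra.adjoin k s at hx
      change x ∈ Algebra.adjoin M s
      induction hx using Algebra.adjoin_induction with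
      | mem x hx => exact Algebra.subset_adjoin hx
      | algebraMap r => exact (Algebra.adjoin M s).algebraMap_mem (⟨r.1, hkM r.2⟩ : M)
      | add x y _ _ h1 h2 => exact add_mem h1 h2
      | mul x y _ _ h1 h2 => exact mul_mem h1 h2
    let f : Algebra.adjoin k s →+* Algebra.adjoin M s := Subring.inclusion hle
    refine (hs a ha).ringHom_of_comp_eq f (RingHom.id E) ?_ ?_
    · exact Subring.inclusion_injective hle
    · rfl
  have hM : ∀ a ∈ M, IsAlgebraic (Algebra.adjoin M s) a := fun a ha =>
    isAlgebraic_algebraMap (⟨a, (Algebra.adjoin M s).algebraMap_mem (⟨a, ha⟩ : M)⟩ : Algebra.adjoin M s)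
  have : K ⊔ M = Subfield.closure ((K : Set E) ∪ M) := by
    rw [Subfield.closure_union, Subfield.closure_eq, Subfield.closure_eq]
  rw [this] at hη
  induction hη using Subfield.closure_induction with
  | mem x hx => exact hx.elim (hK x) (hM x)
  | one => exact isAlgebraic_one
  | add x y _ _ h1 h2 => exact h1.add h2
  | neg x _ h => exact h.neg
  | inv x _ h => exact h.inv
  | mul x y _ _ h1 h2 => exact h1.mul h2

theorem aux_descent {E : Type u} [Field E] (k K L M : Subfield E)
    (hkM : k ≤ M)
    (hfree : FreeOver k K M)
    (hML : M ≤ L) (hLKM : L ≤ K ⊔ M)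
    (G : Subgroup (↥(K ⊔ M) ≃+* ↥(K ⊔ M)))
    (hfix : ∀ σ ∈ G, ∀ z : ↥(K ⊔ M), (z : E) ∈ K → σ z = z)
    (hfixed : ∀ z : ↥(K ⊔ M), (∀ σ ∈ G, σ z = z) → (z : E) ∈ K)
    (hstab : ∀ σ ∈ G, ∀ z : ↥(K ⊔ M), (z : E) ∈ L → ((σ z : ↥(K ⊔ M)) : E) ∈ L)
    (η : E) (hηL : η ∈ L) (hηF : η ∈ K ⊔ M)
    (hηtr : Transcendental ↥M η) :
    ∃ f, f ∈ L ∧ f ∈ K ∧ f ∉ M := by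
  by_contra hcon
  push Not at hcon
  obtain ⟨s, hs⟩ := (AlgebraicIndependent.matroid k E).exists_isBasis (K : Set E)
    (by simp)
  rw [AlgebraicIndependent.matroid_isBasis_iff] at hs
  obtain ⟨hind, hsK, halg⟩ := hs
  have hη := aux_alg k K M hkM s halg η hηF
  have hindM : AlgebraicIndependent M ((↑) : s → E) := by
    apply algebraicIndependent_of_finite
    intro t hts hfin
    obtain ⟨t, rfl⟩ := hfin.exists_finset_coe
    have h0 : AlgebraicIndependent k (fun x : ↥(↑t : Set E) => (x : E)) :=
      AlgebraicIndependent.mono hts hind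
    exact hfree t (hts.trans hsK) h0
  have hindL := aux_indep K L M hML hLKM G hfix hfixed hstab hcon ((↑) : s → E)
    (fun i => hsK i.2) hindM
  let : Algebra M L := (Subfield.inclusion hML).toAlgebra
  have : IsScalarTower M L E := IsScalarTower.of_algebraMap_eq fun _ => rfl
  have h1 : AlgebraicIndependent M (fun _ : Unit => η) :=
    algebraicIndependent_unique_type_iff.mpr hηtr
  have h2 := h1.sumElim_of_tower (S := L) (by
    rintro _ ⟨_, rfl⟩
    exact ⟨⟨η, hηL⟩, rfl⟩) hindL
  have h3 : AlgebraicIndependent M (fun o : Option s => o.elim η ((↑) : s → E)) := by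
    refine (algebraicIndependent_equiv' (Equiv.optionEquivSumPUnit s) ?_).mpr h2
    funext o
    cases o <;> rfl
  have h4 := (AlgebraicIndependent.option_iff.mp h3).2
  rw [Subtype.range_coe] at h4
  exact h4 hη

theorem aux_final {E : Type u} [Field E] (k K M : Subfield E) (hkM : k ≤ M)
    (G : Subgroup (↥(K ⊔ M) ≃+* ↥(K ⊔ M)))
    (hfixed : ∀ z : ↥(K ⊔ M), (∀ σ ∈ G, σ z = z) → (z : E) ∈ K)
    (η : E) (hηF : η ∈ K ⊔ M) (hηtr : Transcendental ↥M η)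
    (hscale : ∀ σ ∈ G, ∃ a ∈ M, ((σ ⟨η, hηF⟩ : ↥(K ⊔ M)) : E) = a * η)
    (p : ↥(K ⊔ M)) (hpM : (p : E) ∈ M) (hp : p ≠ 0) (i n : ℕ) (hin : i ≠ n)
    (h : ∀ σ ∈ G, ∀ a ∈ M, ((σ ⟨η, hηF⟩ : ↥(K ⊔ M)) : E) = a * η →
      ((σ p : ↥(K ⊔ M)) : E) * a ^ i = a ^ n * p) :
    ∃ x ∈ M, ∃ l : ℕ, 0 < l ∧ x * η ^ l ∈ K ∧ x * η ^ l ∉ k := by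
  have hη0 : η ≠ 0 := fun h0 => hηtr (h0 ▸ isAlgebraic_zero)
  have hp0 : (p : E) ≠ 0 := fun h0 => hp (Subtype.ext h0)
  set η' : ↥(K ⊔ M) := ⟨η, hηF⟩ with hη'
  have hη'0 : η' ≠ 0 := fun h0 => hη0 (congrArg Subtype.val h0)
  have hmem : (p : E) * η ^ i / η ^ n ∈ K := by
    apply hfixed (p * η' ^ i / η' ^ n)
    intro σ hσ
    obtain ⟨a, haM, ha⟩ := hscale σ hσ
    have ha0 : a ≠ 0 := by
      rintro rfl
      rw [zero_mul] at ha
      exact hη'0 ((map_eq_zero_iff σ σ.injective).mp (Subtype.ext ha))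
    have h1 := h σ hσ a haM ha
    apply Subtype.ext
    rw [map_div₀, map_mul, map_pow, map_pow]
    push_cast
    rw [ha]
    change _ = (p : E) * η ^ i / η ^ n
    rw [div_eq_div_iff (pow_ne_zero _ (mul_ne_zero ha0 hη0)) (pow_ne_zero _ hη0)]
    calc _ = (((σ p : ↥(K ⊔ M)) : E) * a ^ i) * (η ^ i * η ^ n) := by ring
      _ = _ := by rw [h1]; ring
  have hnot : ∀ x ∈ M, x ≠ 0 → ∀ l : ℕ, 0 < l → x * η ^ l ∉ k := by
    intro x hx hx0 l hl hk
    have h1 : η ^ l ∈ M := by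
      have := M.mul_mem (M.inv_mem hx) (hkM hk)
      rwa [inv_mul_cancel_left₀ hx0] at this
    exact hηtr.pow hl (isAlgebraic_algebraMap (⟨η ^ l, h1⟩ : M))
  rcases lt_or_gt_of_ne hin with hlt | hlt
  · refine ⟨(p : E)⁻¹, M.inv_mem hpM, n - i, by omega, ?_,
      hnot _ (M.inv_mem hpM) (inv_ne_zero hp0) _ (by omega)⟩
    have := K.inv_mem hmem
    convert! this using 1
    rw [pow_sub₀ _ hη0 hlt.le]
    field_simp
  · refine ⟨(p : E), hpM, i - n, by omega, ?_, hnot _ hpM hp0 _ (by omega)⟩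
    convert! hmem using 1
    rw [pow_sub₀ _ hη0 hlt.le]
    field_simp

open Polynomial in
theorem aux_twist {E : Type u} [Field E] (K M : Subfield E)
    (σ : ↥(K ⊔ M) ≃+* ↥(K ⊔ M))
    (hMstab : ∀ z : ↥(K ⊔ M), (((σ z : ↥(K ⊔ M)) : E) ∈ M ↔ (z : E) ∈ M))
    (η : E) (hηF : η ∈ K ⊔ M) (a : M) (ha : ((σ ⟨η, hηF⟩ : ↥(K ⊔ M)) : E) = a * η) :
    ∃ T : M[X] → M[X],
      (∀ Q i, (((T Q).coeff i : M) : E) =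
        ((σ ⟨(Q.coeff i : M), (le_sup_right : M ≤ K ⊔ M) (Q.coeff i).2⟩ : ↥(K ⊔ M)) : E)
          * (a : E) ^ i) ∧
      (∀ Q, ∃ z : ↥(K ⊔ M), (z : E) = aeval η Q ∧ ((σ z : ↥(K ⊔ M)) : E) = aeval η (T Q)) := by
  let j : M →+* ↥(K ⊔ M) := Subfield.inclusion le_sup_right
  let τ : M →+* M := (((K ⊔ M).subtype.comp (σ : ↥(K ⊔ M) →+* ↥(K ⊔ M))).comp j).codRestrict M
    (fun m => (hMstab (j m)).mpr m.2)
  refine ⟨fun Q => (Q.map τ).comp (C a * X), fun Q i => ?_, fun Q => ?_⟩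
  · rw [comp_C_mul_X_coeff, coeff_map]
    push_cast
    rfl
  · refine ⟨eval₂ j ⟨η, hηF⟩ Q, ?_, ?_⟩
    · change (K ⊔ M).subtype _ = _
      rw [hom_eval₂, aeval_def]
      rfl
    · change ((K ⊔ M).subtype.comp (σ : ↥(K ⊔ M) →+* ↥(K ⊔ M))) _ = _
      rw [hom_eval₂, aeval_comp, aeval_def, eval₂_map]
      have : aeval η (C a * X) = (a : E) * η := by
        rw [map_mul, aeval_C, aeval_X]; rfl
      rw [this, ← ha]
      rfl

/-- (Field-theoretic descent, multiplicative form.) In the situation of the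
previous descent statement, if moreover `σ(M) = M` for all `σ ∈ 𝒢`, `L = M(η)` with `η`
transcendental over `M`, and `σ(η) = a_σ · η` with `a_σ ∈ M` for every `σ ∈ 𝒢`, then there
are `x ∈ M` and a positive integer `l` with `x·η^l ∈ K` and `x·η^l ∉ k`. -/
theorem stmt9 {E : Type u} [Field E] (k K L M : Subfield E)
    (hkK : k ≤ K) (hkL : k ≤ L) (hkM : k ≤ M)
    (htd : trdegOf k K < Cardinal.aleph0)
    (hfree : FreeOver k K M)
    (hML : M ≤ L) (hLKM : L ≤ K ⊔ M)
    (htdL : 1 ≤ trdegOf M L)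
    (G : Subgroup (↥(K ⊔ M) ≃+* ↥(K ⊔ M)))
    (hfix : ∀ σ ∈ G, ∀ z : ↥(K ⊔ M), (z : E) ∈ K → σ z = z)
    (hfixed : ∀ z : ↥(K ⊔ M), (∀ σ ∈ G, σ z = z) → (z : E) ∈ K)
    (hstab : ∀ σ ∈ G, ∀ z : ↥(K ⊔ M), (z : E) ∈ L → ((σ z : ↥(K ⊔ M)) : E) ∈ L)
    (hMstab : ∀ σ ∈ G, ∀ z : ↥(K ⊔ M), (((σ z : ↥(K ⊔ M)) : E) ∈ M ↔ (z : E) ∈ M))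
    (η : E) (hηL : η ∈ L) (hηF : η ∈ K ⊔ M)
    (hηtr : Transcendental ↥M η)
    (hLgen : L = Subfield.closure (insert η (M : Set E)))
    (hscale : ∀ σ ∈ G, ∃ a ∈ M, ((σ ⟨η, hηF⟩ : ↥(K ⊔ M)) : E) = a * η) :
    ∃ x ∈ M, ∃ l : ℕ, 0 < l ∧ x * η ^ l ∈ K ∧ x * η ^ l ∉ k := by
  obtain ⟨f, hfL, hfK, hfM⟩ := aux_descent k K L M hkM hfree hML hLKM G hfix hfixed hstab
    η hηL hηF hηtr
  by_contra hcon
  have hin : ∀ (p : M) (i n : ℕ), i ≠ n → (∀ σ ∈ G, ∀ a ∈ M,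
      ((σ ⟨η, hηF⟩ : ↥(K ⊔ M)) : E) = a * η →
      ((σ ⟨p, (le_sup_right : M ≤ K ⊔ M) p.2⟩ : ↥(K ⊔ M)) : E) * a ^ i = a ^ n * p) →
      p = 0 := by
    intro p i n hne h
    by_contra hp
    refine hcon (aux_final k K M hkM G hfixed η hηF hηtr hscale
      ⟨p, (le_sup_right : M ≤ K ⊔ M) p.2⟩ p.2 ?_ i n hne h)
    intro h0
    have h1 : (p : E) = 0 := congrArg (fun z : ↥(K ⊔ M) => (z : E)) h0
    exact hp (Subtype.ext h1)
  have hinj : Function.Injective (Polynomial.aeval (R := M) η) :=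
    transcendental_iff_injective.mp hηtr
  -- existence of a representation
  have hex : ∃ n : ℕ, ∃ P Q : Polynomial M, Q ≠ 0 ∧ Q.natDegree = n ∧
      f * Polynomial.aeval η Q = Polynomial.aeval η P := by
    have hf : f ∈ IntermediateField.adjoin M {η} := by
      have hle : L ≤ (IntermediateField.adjoin M {η}).toSubfield := by
        rw [hLgen, Subfield.closure_le]
        rintro x (rfl | hx)
        · exact IntermediateField.mem_adjoin_simple_self M x
        · exact (IntermediateField.adjoin M {η}).algebraMap_mem (⟨x, hx⟩ : M)
      exact hle hfL
    rw [IntermediateField.mem_adjoin_simple_iff] at hf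
    obtain ⟨r, s, hrs⟩ := hf
    have hs0 : s ≠ 0 := by
      rintro rfl
      rw [map_zero, div_zero] at hrs
      exact hfM (hrs ▸ M.zero_mem)
    have hs1 : Polynomial.aeval η s ≠ 0 := fun h => hs0 (hinj (by rw [h, map_zero]))
    exact ⟨_, r, s, hs0, rfl, by rw [hrs, div_mul_cancel₀ _ hs1]⟩
  classical
  set n := Nat.find hex with hn
  obtain ⟨P₀, Q₀, hQ₀, hdeg₀, hPQ₀⟩ := Nat.find_spec hex
  have hmin : ∀ P Q : Polynomial M, f * Polynomial.aeval η Q = Polynomial.aeval η P →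
      (∀ i, n ≤ i → Q.coeff i = 0) → Q = 0 := by
    intro P Q hPQ hlt
    by_contra hQ
    have hd : Q.natDegree < n := by
      by_contra hge
      exact hQ (Polynomial.leadingCoeff_eq_zero.mp (hlt _ (not_lt.mp hge)))
    exact Nat.find_min hex hd ⟨P, Q, hQ, rfl, hPQ⟩
  -- normalise
  obtain ⟨P, Q, hQmon, hdeg, hPQ⟩ : ∃ P Q : Polynomial M, Q.Monic ∧ Q.natDegree = n ∧
      f * Polynomial.aeval η Q = Polynomial.aeval η P := by
    have hlc : Q₀.leadingCoeff ≠ 0 := Polynomial.leadingCoeff_ne_zero.mpr hQ₀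
    refine ⟨P₀ * Polynomial.C Q₀.leadingCoeff⁻¹, Q₀ * Polynomial.C Q₀.leadingCoeff⁻¹,
      Polynomial.monic_mul_leadingCoeff_inv hQ₀, ?_, ?_⟩
    · rw [Polynomial.natDegree_mul_C (inv_ne_zero hlc), hdeg₀]
    · rw [map_mul, map_mul, ← mul_assoc, hPQ₀]
  have hQn : Q.coeff n = 1 := by rw [← hdeg]; exact hQmon
  have hQgt : ∀ i, n < i → Q.coeff i = 0 := fun i hi =>
    Polynomial.coeff_eq_zero_of_natDegree_lt (hdeg ▸ hi)
  have hkey : ∀ σ ∈ G, ∀ a ∈ M, ((σ ⟨η, hηF⟩ : ↥(K ⊔ M)) : E) = a * η →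
      (∀ i, ((σ ⟨(Q.coeff i : M), (le_sup_right : M ≤ K ⊔ M) (Q.coeff i).2⟩ : ↥(K ⊔ M)) : E)
        * a ^ i = a ^ n * (Q.coeff i : M)) ∧
      (∀ i, ((σ ⟨(P.coeff i : M), (le_sup_right : M ≤ K ⊔ M) (P.coeff i).2⟩ : ↥(K ⊔ M)) : E)
        * a ^ i = a ^ n * (P.coeff i : M)) := by
    intro σ hσ a haM ha
    obtain ⟨T, hT1, hT2⟩ := aux_twist K M σ (hMstab σ hσ) η hηF ⟨a, haM⟩ ha
    have hTeq : f * Polynomial.aeval η (T Q) = Polynomial.aeval η (T P) := by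
      obtain ⟨z, hz, hσz⟩ := hT2 Q
      obtain ⟨w, hw, hσw⟩ := hT2 P
      have hzw : (⟨f, hLKM hfL⟩ : ↥(K ⊔ M)) * z = w := by
        apply Subtype.ext
        push_cast
        rw [hz, hw, hPQ]
      have := congrArg σ hzw
      rw [map_mul, hfix σ hσ ⟨f, hLKM hfL⟩ hfK] at this
      have := congrArg Subtype.val this
      rw [← hσz, ← hσw]
      exact this
    set c : M := ⟨a, haM⟩ ^ n with hc
    have hcE : (c : E) = a ^ n := rfl
    have hQ0 : T Q - Polynomial.C c * Q = 0 := by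
      refine hmin (T P - Polynomial.C c * P) _ ?_ ?_
      · simp only [map_sub, map_mul, mul_sub, hTeq, ← hPQ]
        ring
      · intro i hi
        rw [Polynomial.coeff_sub, Polynomial.coeff_C_mul, sub_eq_zero]
        apply Subtype.ext
        rw [hT1]
        rcases hi.eq_or_lt with rfl | hi
        · have h1 : (⟨((Q.coeff n : M) : E), (le_sup_right : M ≤ K ⊔ M) (Q.coeff n).2⟩
              : ↥(K ⊔ M)) = 1 := Subtype.ext (by rw [hQn]; rfl)
          rw [h1, map_one, hQn, mul_one, hcE]
          simp
        · have h1 : (⟨((Q.coeff i : M) : E), (le_sup_right : M ≤ K ⊔ M) (Q.coeff i).2⟩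
              : ↥(K ⊔ M)) = 0 := Subtype.ext (by rw [hQgt i hi]; rfl)
          rw [h1, map_zero, hQgt i hi]
          simp
    have hP0 : T P = Polynomial.C c * P := by
      apply hinj
      rw [← hTeq, sub_eq_zero.mp hQ0, map_mul, map_mul, ← hPQ]
      ring
    refine ⟨fun i => ?_, fun i => ?_⟩
    · rw [← hcE]
      refine (hT1 Q i).symm.trans ?_
      rw [sub_eq_zero.mp hQ0, Polynomial.coeff_C_mul]
      rfl
    · rw [← hcE]
      refine (hT1 P i).symm.trans ?_
      rw [hP0, Polynomial.coeff_C_mul]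
      rfl
  have hQi : ∀ i, i ≠ n → Q.coeff i = 0 := fun i hi =>
    hin _ i n hi fun σ hσ a haM ha => (hkey σ hσ a haM ha).1 i
  have hPi : ∀ i, i ≠ n → P.coeff i = 0 := fun i hi =>
    hin _ i n hi fun σ hσ a haM ha => (hkey σ hσ a haM ha).2 i
  have hPeq : P = Polynomial.C (P.coeff n) * Q := by
    ext i
    rw [Polynomial.coeff_C_mul]
    by_cases hi : i = n
    · rw [hi, hQn, mul_one]
    · rw [hPi i hi, hQi i hi, mul_zero]
  rw [hPeq, map_mul, Polynomial.aeval_C] at hPQ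
  have hQ1 : Polynomial.aeval η Q ≠ 0 := fun h =>
    hQmon.ne_zero (hinj (by rw [h, map_zero]))
  have := mul_right_cancel₀ hQ1 hPQ
  rw [this] at hfM
  exact hfM (P.coeff n).2
end

section
/- Let k be a differential field of characteristic zero whose field of constants C is algebraically closed, and let k ⊂ K ⊆ E be differential fields such that the field of constants of E equals C. Suppose y ∈ E is transcendental over k, algebraic over K, and satisfies L(y) = 0 for some monic linear differential operator L over k. Then there exists an element x ∈ K that is transcendental over k and satisfies some monic linear homogeneous differential equation with coefficients in k. -/
universe u

open scoped Differential in
/-- `x` lies in a finite dimensional `k`-subspace stable under the derivation. -/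
def Hol10 (k : Type*) {A : Type*} [Field k] [CommRing A] [Algebra k A] [Differential A]
    (x : A) : Prop :=
  ∃ V : Submodule k A, V.FG ∧ x ∈ V ∧ ∀ v ∈ V, v′ ∈ V

section hol
open scoped Differential

variable {k A : Type*} [Field k] [CommRing A] [Algebra k A] [Differential k] [Differential A]
  [DifferentialAlgebra k A]

theorem deriv_smul10 (c : k) (v : A) : (c • v)′ = c • v′ + c′ • v := by
  rw [Algebra.smul_def, Derivation.leibniz, deriv_algebraMap]
  rw [smul_eq_mul, smul_eq_mul, Algebra.smul_def, Algebra.smul_def, mul_comm v]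

theorem span_stable10 (S : Set A) (h : ∀ s ∈ S, s′ ∈ Submodule.span k S) :
    ∀ v ∈ Submodule.span k S, v′ ∈ Submodule.span k S := by
  intro v hv
  induction hv using Submodule.span_induction with
  | mem x hx => exact h x hx
  | zero => simp
  | add x y _ _ hx hy => rw [map_add]; exact add_mem hx hy
  | smul c x hx' hx =>
    rw [deriv_smul10]
    exact add_mem (Submodule.smul_mem _ _ hx) (Submodule.smul_mem _ _ hx')

theorem Hol10.one : Hol10 k (1 : A) :=
  ⟨Submodule.span k {1}, Submodule.fg_span (Set.finite_singleton _),
    Submodule.mem_span_singleton_self _, span_stable10 _ (by simp)⟩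

theorem Hol10.add {x y : A} (hx : Hol10 k x) (hy : Hol10 k y) : Hol10 k (x + y) := by
  obtain ⟨V, hV, hxV, hVs⟩ := hx
  obtain ⟨W, hW, hyW, hWs⟩ := hy
  refine ⟨V ⊔ W, hV.sup hW, Submodule.add_mem_sup hxV hyW, ?_⟩
  intro v hv
  obtain ⟨a, ha, b, hb, rfl⟩ := Submodule.mem_sup.1 hv
  rw [map_add]
  exact Submodule.add_mem_sup (hVs a ha) (hWs b hb)

theorem Hol10.mul {x y : A} (hx : Hol10 k x) (hy : Hol10 k y) : Hol10 k (x * y) := by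
  obtain ⟨V, hV, hxV, hVs⟩ := hx
  obtain ⟨W, hW, hyW, hWs⟩ := hy
  refine ⟨V * W, hV.mul hW, Submodule.mul_mem_mul hxV hyW, ?_⟩
  intro v hv
  induction hv using Submodule.mul_induction_on' with
  | mem_mul_mem a ha b hb =>
    rw [Derivation.leibniz, smul_eq_mul, smul_eq_mul, mul_comm b]
    exact add_mem (Submodule.mul_mem_mul ha (hWs b hb)) (Submodule.mul_mem_mul (hVs a ha) hb)
  | add a _ b _ ha hb => rw [map_add]; exact add_mem ha hb

omit [Differential k] [DifferentialAlgebra k A] in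
theorem Hol10.neg {x : A} (hx : Hol10 k x) : Hol10 k (-x) := by
  obtain ⟨V, hV, hxV, hVs⟩ := hx
  exact ⟨V, hV, neg_mem hxV, hVs⟩

omit [Differential k] [DifferentialAlgebra k A] in
theorem Hol10.zero : Hol10 k (0 : A) :=
  ⟨⊥, Submodule.fg_bot, Submodule.zero_mem _, by simp⟩

/-- The subring of such elements. -/
def holRing10 (k A : Type*) [Field k] [CommRing A] [Algebra k A] [Differential k] [Differential A]
    [DifferentialAlgebra k A] : Subring A where
  carrier := {x | Hol10 k x}
  zero_mem' := Hol10.zero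
  one_mem' := Hol10.one
  add_mem' := Hol10.add
  mul_mem' := Hol10.mul
  neg_mem' := Hol10.neg

omit [Differential k] [DifferentialAlgebra k A] in
theorem Hol10.map {B : Type*} [CommRing B] [Algebra k B] [Differential B] (f : A →ₐ[k] B)
    (hf : ∀ x, f (x′) = (f x)′) {x : A} (hx : Hol10 k x) : Hol10 k (f x) := by
  obtain ⟨V, hV, hxV, hVs⟩ := hx
  refine ⟨V.map f.toLinearMap, hV.map _, ⟨x, hxV, rfl⟩, ?_⟩
  rintro _ ⟨v, hv, rfl⟩
  exact ⟨v′, hVs v hv, hf v⟩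

omit [Differential k] [DifferentialAlgebra k A] in
theorem Hol10.comap {B : Type*} [CommRing B] [Algebra k B] [Differential B] (f : A →ₐ[k] B)
    (hf : ∀ x, f (x′) = (f x)′) (hinj : Function.Injective f) {x : A} (hx : Hol10 k (f x)) :
    Hol10 k x := by
  obtain ⟨V, hV, hxV, hVs⟩ := hx
  refine ⟨V.comap f.toLinearMap, ?_, hxV, ?_⟩
  · have : FiniteDimensional k V := Module.Finite.iff_fg.2 hV
    refine Submodule.fg_of_fg_map_injective f.toLinearMap hinj ?_
    rw [Submodule.map_comap_eq]
    have : FiniteDimensional k ↥(LinearMap.range f.toLinearMap ⊓ V) :=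
      Submodule.finiteDimensional_of_le inf_le_right
    exact Module.Finite.iff_fg.1 this
  · intro v hv
    change f (v′) ∈ V
    rw [hf]
    exact hVs _ hv

theorem Hol10.of_eq {n : ℕ} {a : Fin n → k} {x : A}
    (h : Differential.deriv^[n] x + ∑ i, a i • Differential.deriv^[(i : ℕ)] x = 0) :
    Hol10 k x := by
  rcases Nat.eq_zero_or_pos n with rfl | hn
  · have : x = 0 := by simpa using h
    rw [this]; exact Hol10.zero
  let S : Set A := Set.range fun i : Fin n => Differential.deriv^[(i : ℕ)] x
  refine ⟨Submodule.span k S, Submodule.fg_span (Set.finite_range _),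
    Submodule.subset_span ⟨⟨0, hn⟩, rfl⟩, span_stable10 _ ?_⟩
  rintro _ ⟨i, rfl⟩
  simp only
  rw [← Function.iterate_succ_apply' (⇑Differential.deriv)]
  by_cases hi : (i : ℕ) + 1 < n
  · exact Submodule.subset_span ⟨⟨i + 1, hi⟩, rfl⟩
  · have : (i : ℕ) + 1 = n := by omega
    rw [Nat.succ_eq_add_one, this, eq_neg_of_add_eq_zero_left h]
    exact neg_mem (Submodule.sum_mem _ fun j _ => Submodule.smul_mem _ _
      (Submodule.subset_span ⟨j, rfl⟩))

omit [Differential k] [DifferentialAlgebra k A] in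
theorem Hol10.exists_eq {x : A} (hx : Hol10 k x) : ∃ (n : ℕ) (a : Fin n → k),
    Differential.deriv^[n] x + ∑ i, a i • Differential.deriv^[(i : ℕ)] x = 0 := by
  obtain ⟨V, hV, hxV, hVs⟩ := hx
  have : FiniteDimensional k V := Module.Finite.iff_fg.2 hV
  have hmem : ∀ n : ℕ, Differential.deriv^[n] x ∈ V := by
    intro n
    induction n with
    | zero => exact hxV
    | succ n ih => rw [Function.iterate_succ_apply']; exact hVs _ ih
  let w : ℕ → V := fun n => ⟨_, hmem n⟩
  let f : ℕ →o Submodule k V :=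
    ⟨fun n => Submodule.span k (Set.range fun i : Fin n => w i), by
      intro m n hmn
      refine Submodule.span_mono ?_
      rintro _ ⟨i, rfl⟩
      exact ⟨⟨i, by omega⟩, rfl⟩⟩
  obtain ⟨n, hn⟩ := monotone_stabilizes_iff_noetherian.mpr inferInstance f
  have h1 : w n ∈ f n := by
    rw [hn (n + 1) (by omega)]
    exact Submodule.subset_span ⟨⟨n, by omega⟩, rfl⟩
  obtain ⟨c, hc⟩ := (Submodule.mem_span_range_iff_exists_fun k).1 h1
  refine ⟨n, fun i => - c i, ?_⟩
  have h2 := congrArg V.subtype hc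
  simp only [map_sum, map_smul] at h2
  change ∑ i, c i • Differential.deriv^[(i : ℕ)] x = Differential.deriv^[n] x at h2
  rw [← h2]
  simp

end hol

section core
open scoped Differential
open Polynomial IntermediateField Differential

theorem core10 {k K E : Type*} [Field k] [Field K] [Field E] [CharZero K] [Algebra k K]
    [Algebra K E] [Algebra k E] [IsScalarTower k K E] [Differential k] [Differential K]
    [Differential E] [DifferentialAlgebra k K] [DifferentialAlgebra K E]
    (y : E) (hytr : Transcendental k y) (hyalg : IsAlgebraic K y) (hy : Hol10 k y) :
    ∃ x : K, Transcendental k x ∧ Hol10 k x := by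
  have hint : IsIntegral K y := hyalg.isIntegral
  set p := minpoly K y with hp
  have hpm : p.Monic := minpoly.monic hint
  by_contra! hcon
  -- all coefficients are holonomic
  have hcoeff : ∀ n, Hol10 k (p.coeff n) := by
    intro n
    letI : Differential p.SplittingField := differentialFiniteDimensional K _
    haveI : DifferentialAlgebra K p.SplittingField := differentialAlgebraFiniteDimensional
    haveI : DifferentialAlgebra k p.SplittingField := ⟨fun a => by
      rw [IsScalarTower.algebraMap_apply k K, deriv_algebraMap, deriv_algebraMap,
        ← IsScalarTower.algebraMap_apply k K]⟩
    haveI : FiniteDimensional K K⟮y⟯ := adjoin.finiteDimensional hint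
    have hgen : Hol10 k (AdjoinSimple.gen K y) := by
      refine Hol10.comap ((K⟮y⟯.val).restrictScalars k) (fun x => ?_)
        (K⟮y⟯.val).injective (x := AdjoinSimple.gen K y) ?_
      · exact algHom_deriv' K⟮y⟯.val (K⟮y⟯.val).injective x
      · exact hy
    have hroot : ∀ z ∈ (p.map (algebraMap K p.SplittingField)).roots, Hol10 k z := by
      intro z hz
      have hz' : z ∈ p.aroots p.SplittingField := hz
      let φ : K⟮y⟯ →ₐ[K] p.SplittingField := (algHomAdjoinIntegralEquiv K hint).symm ⟨z, hz'⟩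
      have h1 : φ (AdjoinSimple.gen K y) = z :=
        algHomAdjoinIntegralEquiv_symm_apply_gen K hint ⟨z, hz'⟩
      rw [← h1]
      exact hgen.map (φ.restrictScalars k) (fun x => algHom_deriv' φ φ.injective x)
    refine Hol10.comap (IsScalarTower.toAlgHom k K p.SplittingField)
      (fun x => (deriv_algebraMap x).symm) (algebraMap K p.SplittingField).injective ?_
    change Hol10 k (algebraMap K p.SplittingField (p.coeff n))
    rw [← coeff_map]
    have hl : p.map (algebraMap K p.SplittingField) ∈
        Polynomial.lifts (holRing10 k p.SplittingField).subtype := by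
      rw [(SplittingField.splits p).eq_prod_roots_of_monic (hpm.map _)]
      refine Subsemiring.multiset_prod_mem _ _ ?_
      intro q hq
      obtain ⟨z, hz, rfl⟩ := Multiset.mem_map.1 hq
      rw [mem_lifts]
      exact ⟨X - C ⟨z, hroot z hz⟩, by simp⟩
    obtain ⟨r, hr⟩ := (lifts_iff_coeff_lifts _).1 hl n
    rw [← hr]
    exact r.2
  have halg : ∀ n, IsIntegral k (p.coeff n) := by
    intro n
    by_contra hn
    exact hcon _ (fun h => hn h.isIntegral) (hcoeff n)
  apply hytr
  have hl : p ∈ Polynomial.lifts (algebraMap (integralClosure k K) K) := by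
    rw [lifts_iff_coeff_lifts]
    exact fun n => ⟨⟨p.coeff n, halg n⟩, rfl⟩
  obtain ⟨q, hq, -, hqm⟩ := lifts_and_natDegree_eq_and_monic hl hpm
  have : IsIntegral (integralClosure k K) y := by
    refine ⟨q, hqm, ?_⟩
    rw [IsScalarTower.algebraMap_eq (integralClosure k K) K E, ← eval₂_map, hq]
    exact minpoly.aeval K y
  exact (isIntegral_trans (R := k) y this).isAlgebraic

end core

/-- Restriction of a derivation to a stable subfield. -/
def restrictDeriv10 {E : Type*} [Field E] (D : Derivation ℤ E E) (k : Subfield E)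
    (hk : ∀ x ∈ k, D x ∈ k) : Derivation ℤ k k :=
  Derivation.mk' (AddMonoidHom.toIntLinearMap
    { toFun := fun x => ⟨D x, hk x x.2⟩
      map_zero' := by ext; simp
      map_add' := fun a b => by ext; simp }) (fun a b => by ext; simp)

/-- Let `k ⊂ K ⊆ E` be differential fields with `C_E = C`. If `y ∈ E` is
transcendental over `k`, algebraic over `K` and annihilated by a monic linear differential
operator over `k`, then `K` contains an element transcendental over `k` that is annihilated
by some monic linear differential operator over `k`. -/
theorem stmt10 {E : Type u} [Field E] [CharZero E] (D : Derivation ℤ E E)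
    (k K : Subfield E)
    (hk : ∀ x ∈ k, D x ∈ k) (hK : ∀ x ∈ K, D x ∈ K)
    (hC : IsAlgClosed ↥(constantsOf D k))
    (hkK : k < K)
    (hconst : ∀ x : E, D x = 0 → x ∈ k)
    (y : E) (hytr : Transcendental ↥k y) (hyalg : IsAlgebraic ↥K y)
    (hsol : ∃ (n : ℕ) (a : Fin n → E), (∀ i, a i ∈ k) ∧ LApply (⇑D) n a y = 0) :
    ∃ x, x ∈ K ∧ Transcendental ↥k x ∧
      ∃ (m : ℕ) (b : Fin m → E), (∀ i, b i ∈ k) ∧ LApply (⇑D) m b x = 0 := by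
  letI : Differential E := ⟨D⟩
  letI : Differential k := ⟨restrictDeriv10 D k hk⟩
  letI : Differential K := ⟨restrictDeriv10 D K hK⟩
  letI : Algebra k K := (Subfield.inclusion hkK.le).toAlgebra
  haveI : IsScalarTower k K E := IsScalarTower.of_algebraMap_eq fun _ => rfl
  haveI : DifferentialAlgebra k K := ⟨fun _ => rfl⟩
  haveI : DifferentialAlgebra K E := ⟨fun _ => rfl⟩
  haveI : DifferentialAlgebra k E := ⟨fun _ => rfl⟩
  obtain ⟨n, a, ha, hL⟩ := hsol
  have hy : Hol10 k y := by
    refine Hol10.of_eq (n := n) (a := fun i => (⟨a i, ha i⟩ : k)) ?_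
    exact hL
  obtain ⟨x, hxt, hx⟩ := core10 (k := k) (K := K) y hytr hyalg hy
  have hx2 : Hol10 k (x : E) := hx.map (IsScalarTower.toAlgHom k K E) (fun _ => rfl)
  obtain ⟨m, b, hb⟩ := hx2.exists_eq
  refine ⟨x, x.2, ?_, m, fun i => b i, fun i => (b i).2, hb⟩
  intro h
  exact hxt ((isAlgebraic_algebraMap_iff (R := k) (algebraMap K E).injective).1 h)
end
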